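/- (MaxProb/MaxEnt convergence) Let X be a finite alphabet and q a source with all q_i > 0. For each n let ν̂^n be a μ-projection of q on Π_n = Π ∩ P_n (a maximizer of the type probability π(ν; q) over n-types in Π), where Π is a closed subset of the simplex with Π_n nonempty for all large n and such that every point of Π is a limit of n-types in Π. Then every limit point of the sequence (ν̂^n) is an I-projection of q on Π, i.e., minimizes I(p‖q) over Π. -/

import Mathlib

open Real Filter Topology Finset

/-- A probability mass function on `Fin m`. -/
def IsPMF {m : ℕ} (p : Fin m → ℝ) : Prop := (∀ i, 0 ≤ p i) ∧ ∑ i, p i = 1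

/-- An `n`-type: a pmf whose entries are integer multiples of `1/n`. -/
def IsType {m : ℕ} (n : ℕ) (ν : Fin m → ℝ) : Prop :=
  IsPMF ν ∧ ∀ i, ∃ k : ℕ, ν i = (k : ℝ) / n

/-- Multiplicity `Γ(ν) = n! / ∏ (n νᵢ)!` of an `n`-type. -/
noncomputable def mult {m : ℕ} (n : ℕ) (ν : Fin m → ℝ) : ℝ :=
  (n.factorial : ℝ) / ∏ i, (Nat.factorial ⌊(n : ℝ) * ν i⌋₊ : ℝ)

/-- Probability `π(ν; q) = Γ(ν) ∏ qᵢ^{n νᵢ}` of the type `ν` in `n` iid draws from `q`. -/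
noncomputable def typeProb {m : ℕ} (n : ℕ) (ν q : Fin m → ℝ) : ℝ :=
  mult n ν * ∏ i, q i ^ ((n : ℝ) * ν i)

/-- Kullback–Leibler divergence (with `0 log 0 = 0`, automatic since `Real.log 0 = 0`). -/
noncomputable def KL {m : ℕ} (p q : Fin m → ℝ) : ℝ := ∑ i, p i * Real.log (p i / q i)

/-- Shannon entropy. -/
noncomputable def entH {m : ℕ} (ν : Fin m → ℝ) : ℝ := -∑ i, ν i * Real.log (ν i)

/-- Total variation metric `d(a,b) = ∑ |aᵢ - bᵢ|`. -/
noncomputable def tv {m : ℕ} (a b : Fin m → ℝ) : ℝ := ∑ i, |a i - b i|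

/-- The finite set of all `n`-types on `Fin m`. -/
noncomputable def typeFinset (n m : ℕ) : Finset (Fin m → ℝ) := by
  classical
  exact ((Fintype.piFinset (fun _ : Fin m => Finset.range (n + 1))).filter
      (fun k => ∑ i, k i = n)).image (fun k i => (k i : ℝ) / n)

open scoped Classical in
/-- Conditional probability that the empirical `n`-type lies in `A`, given it lies in `B`;
expressed as a ratio of type-probability sums. -/
noncomputable def condProb {m : ℕ} (n : ℕ) (q : Fin m → ℝ)
    (A B : Set (Fin m → ℝ)) : ℝ :=
  (∑ ν ∈ (typeFinset n m).filter (fun ν => ν ∈ A ∩ B), typeProb n ν q) /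
  (∑ ν ∈ (typeFinset n m).filter (fun ν => ν ∈ B), typeProb n ν q)


lemma aux_fact (k : ℕ) :
    |Real.log (k.factorial : ℝ) - ((k : ℝ) * Real.log k - k)| ≤ Real.log ((k : ℝ) + 1) + 1 := by
  have step : ∀ k : ℕ, (k : ℝ) * (Real.log ((k : ℝ) + 1) - Real.log k) ≤ 1 := by
    intro k
    rcases Nat.eq_zero_or_pos k with h | h
    · subst h; simp
    · have hk : (0 : ℝ) < k := by exact_mod_cast h
      rw [← Real.log_div (by positivity) (by positivity)]
      have h1 := Real.log_le_sub_one_of_pos (x := ((k : ℝ) + 1) / k) (by positivity)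
      calc (k : ℝ) * Real.log (((k : ℝ) + 1) / k) ≤ k * (((k : ℝ) + 1) / k - 1) := by gcongr
        _ = 1 := by field_simp; ring
  have low : (k : ℝ) * Real.log k - k ≤ Real.log (k.factorial : ℝ) := by
    induction k with
    | zero => simp
    | succ k ih =>
      rw [Nat.factorial_succ]
      push_cast
      rw [Real.log_mul (by positivity) (by positivity)]
      have := step k
      nlinarith
  have up : Real.log (k.factorial : ℝ) ≤ ((k : ℝ) + 1) * Real.log ((k : ℝ) + 1) - k := by
    clear low
    induction k with
    | zero => simp
    | succ k ih =>
      rw [Nat.factorial_succ]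
      push_cast
      rw [Real.log_mul (by positivity) (by positivity)]
      have h1 := Real.log_le_sub_one_of_pos (x := ((k : ℝ) + 1) / (k + 1 + 1)) (by positivity)
      rw [Real.log_div (by positivity) (by positivity)] at h1
      have h2 : ((k : ℝ) + 1 + 1) * (Real.log ((k : ℝ) + 1) - Real.log ((k : ℝ) + 1 + 1)) ≤
          ((k : ℝ) + 1 + 1) * (((k : ℝ) + 1) / (k + 1 + 1) - 1) := by gcongr
      have h3 : ((k : ℝ) + 1 + 1) * (((k : ℝ) + 1) / (k + 1 + 1) - 1) = -1 := by
        field_simp; ring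
      nlinarith
  have h0 : 0 ≤ Real.log ((k : ℝ) + 1) := Real.log_nonneg (by linarith [Nat.cast_nonneg (α := ℝ) k])
  have := step k
  rw [abs_le]
  constructor <;> nlinarith

lemma aux_pos {m : ℕ} (n : ℕ) (ν q : Fin m → ℝ) (hq : ∀ i, 0 < q i) : 0 < typeProb n ν q := by
  unfold typeProb mult
  have : 0 < ∏ i, q i ^ ((n : ℝ) * ν i) := Finset.prod_pos fun i _ => Real.rpow_pos_of_pos (hq i) _
  positivity

lemma aux_type {m : ℕ} (n : ℕ) (hn : 0 < n) (ν q : Fin m → ℝ) (hq : ∀ i, 0 < q i)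
    (hν : IsType n ν) :
    |Real.log (typeProb n ν q) + n * KL ν q| ≤ ((m : ℝ) + 1) * (Real.log ((n : ℝ) + 1) + 1) := by
  obtain ⟨⟨hν0, hν1⟩, hk⟩ := hν
  choose k hk using hk
  have hn' : (0 : ℝ) < n := by exact_mod_cast hn
  have hnk : ∀ i, (n : ℝ) * ν i = k i := fun i => by rw [hk i]; field_simp
  have hsum : ∑ i, (k i : ℝ) = n := by
    simp_rw [← hnk]; rw [← Finset.mul_sum, hν1, mul_one]
  have hkn : ∀ i, (k i : ℝ) ≤ n := fun i => by
    rw [← hsum]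
    exact Finset.single_le_sum (f := fun i => (k i : ℝ)) (fun j _ => Nat.cast_nonneg _)
      (Finset.mem_univ i)
  have hlog : Real.log (typeProb n ν q) = Real.log (n.factorial : ℝ)
      - ∑ i, Real.log ((k i).factorial : ℝ) + ∑ i, (k i : ℝ) * Real.log (q i) := by
    unfold typeProb mult
    have h1 : ∏ i, q i ^ ((n : ℝ) * ν i) ≠ 0 :=
      (Finset.prod_pos fun i _ => Real.rpow_pos_of_pos (hq i) _).ne'
    have h2 : ∏ i, (Nat.factorial ⌊(n : ℝ) * ν i⌋₊ : ℝ) ≠ 0 := by positivity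
    rw [Real.log_mul (by positivity) h1, Real.log_div (by positivity) h2, Real.log_prod, Real.log_prod]
    · simp_rw [hnk, Nat.floor_natCast, Real.log_rpow (hq _)]
    · intro i _; exact (Real.rpow_pos_of_pos (hq i) _).ne'
    · intro i _; positivity
  have hterm : ∀ i, (n : ℝ) * (ν i * Real.log (ν i / q i)) =
      ((k i : ℝ) * Real.log (k i) - k i) + k i - k i * Real.log n - k i * Real.log (q i) := by
    intro i
    rw [← mul_assoc, hnk]
    rcases Nat.eq_zero_or_pos (k i) with h | h
    · simp [h]
    · have hk' : (0 : ℝ) < k i := by exact_mod_cast h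
      rw [hk i, Real.log_div (by positivity) (hq i).ne', Real.log_div (by positivity) (by positivity)]
      ring
  have hKL : (n : ℝ) * KL ν q = ∑ i, ((k i : ℝ) * Real.log (k i) - k i) + n - n * Real.log n
      - ∑ i, (k i : ℝ) * Real.log (q i) := by
    unfold KL
    rw [Finset.mul_sum, Finset.sum_congr rfl fun i _ => hterm i]
    rw [Finset.sum_sub_distrib, Finset.sum_sub_distrib, Finset.sum_add_distrib, ← Finset.sum_mul, hsum]
  have heq : Real.log (typeProb n ν q) + n * KL ν q =
      (Real.log (n.factorial : ℝ) - ((n : ℝ) * Real.log n - n)) -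
      ∑ i, (Real.log ((k i).factorial : ℝ) - ((k i : ℝ) * Real.log (k i) - k i)) := by
    simp only [hlog, hKL, Finset.sum_sub_distrib]; ring
  rw [heq]
  have hS : |∑ i, (Real.log ((k i).factorial : ℝ) - ((k i : ℝ) * Real.log (k i) - k i))| ≤
      (m : ℝ) * (Real.log ((n : ℝ) + 1) + 1) := by
    refine (Finset.abs_sum_le_sum_abs _ _).trans ?_
    have : ∀ i ∈ Finset.univ, |Real.log ((k i).factorial : ℝ) - ((k i : ℝ) * Real.log (k i) - k i)| ≤
        Real.log ((n : ℝ) + 1) + 1 := by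
      intro i _
      refine (aux_fact (k i)).trans ?_
      have := hkn i
      gcongr
    refine (Finset.sum_le_sum this).trans ?_
    simp [mul_add]
  have h1 := aux_fact n
  refine (abs_sub _ _).trans ?_
  linarith

lemma aux_cont {m : ℕ} (q : Fin m → ℝ) (hq : ∀ i, 0 < q i) :
    Continuous fun p : Fin m → ℝ => KL p q := by
  have : (fun p : Fin m → ℝ => KL p q) =
      fun p => ∑ i, (p i * Real.log (p i) - p i * Real.log (q i)) := by
    funext p
    refine Finset.sum_congr rfl fun i _ => ?_
    by_cases h : p i = 0
    · simp [h]
    · rw [Real.log_div h (hq i).ne']; ring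
  rw [this]
  refine continuous_finsetSum _ fun i _ => ?_
  exact (Real.continuous_mul_log.comp (continuous_apply i)).sub
    ((continuous_apply i).mul continuous_const)

lemma aux_lim (m : ℕ) : Tendsto (fun n : ℕ => 2 * (((m : ℝ) + 1) *
    (Real.log ((n : ℝ) + 1) + 1)) / n) atTop (𝓝 0) := by
  have h1 : (fun n : ℕ => 2 * (((m : ℝ) + 1) * (Real.log ((n : ℝ) + 1) + 1)))
      =o[atTop] fun n : ℕ => (n : ℝ) := by
    have ht : Tendsto (fun n : ℕ => (n : ℝ) + 1) atTop atTop :=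
      tendsto_atTop_add_const_right _ _ tendsto_natCast_atTop_atTop
    have hc : ∀ c : ℝ, (fun _ : ℕ => c) =o[atTop] fun n : ℕ => (n : ℝ) := fun c =>
      (Asymptotics.isLittleO_const_id_atTop c).comp_tendsto tendsto_natCast_atTop_atTop
    have hl : (fun n : ℕ => Real.log ((n : ℝ) + 1)) =o[atTop] fun n : ℕ => (n : ℝ) + 1 :=
      Real.isLittleO_log_id_atTop.comp_tendsto ht
    have hO : (fun n : ℕ => (n : ℝ) + 1) =O[atTop] fun n : ℕ => (n : ℝ) :=
      (Asymptotics.isBigO_refl _ _).add (hc 1).isBigO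
    exact (((hl.trans_isBigO hO).add (hc 1)).const_mul_left _).const_mul_left _
  exact h1.tendsto_div_nhds_zero

/-- MaxProb/MaxEnt convergence: If ν̂^n maximizes the type probability
π(·; q) over the n-types in a closed subset S of the simplex (nonempty for large n, every
point of S being a limit of n-types in S), then every limit point of (ν̂^n) is an
I-projection of q on S. -/
theorem stmt10 {m : ℕ} (q : Fin m → ℝ) (hq : IsPMF q) (hqpos : ∀ i, 0 < q i)
    (S : Set (Fin m → ℝ)) (hsub : ∀ p ∈ S, IsPMF p) (hclosed : IsClosed S)
    (happrox : ∀ p ∈ S, ∃ T : ℕ → Fin m → ℝ,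
      (∀ᶠ n in atTop, IsType n (T n) ∧ T n ∈ S) ∧ Tendsto T atTop (𝓝 p))
    (nuhat : ℕ → Fin m → ℝ) (N : ℕ)
    (hmax : ∀ n ≥ N, IsType n (nuhat n) ∧ nuhat n ∈ S ∧
      ∀ ν, IsType n ν → ν ∈ S → typeProb n ν q ≤ typeProb n (nuhat n) q)
    (hne : ∀ n ≥ N, ∃ ν, IsType n ν ∧ ν ∈ S)
    (p : Fin m → ℝ) (φ : ℕ → ℕ) (hφ : StrictMono φ)
    (hlim : Tendsto (nuhat ∘ φ) atTop (𝓝 p)) :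
    p ∈ S ∧ ∀ p' ∈ S, KL p q ≤ KL p' q := by
  have hφt := hφ.tendsto_atTop
  have hev : ∀ᶠ j in atTop, N ≤ φ j := hφt.eventually_ge_atTop N
  refine ⟨hclosed.mem_of_tendsto hlim (hev.mono fun j hj => (hmax _ hj).2.1), ?_⟩
  intro p' hp'
  obtain ⟨T, hT, hTlim⟩ := happrox p' hp'
  have hcont := aux_cont q hqpos
  have hL : Tendsto (fun j => KL (nuhat (φ j)) q) atTop (𝓝 (KL p q)) :=
    (hcont.tendsto p).comp hlim
  have hR : Tendsto (fun j => KL (T (φ j)) q + 2 * (((m : ℝ) + 1) *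
      (Real.log (((φ j : ℕ) : ℝ) + 1) + 1)) / (φ j : ℕ)) atTop (𝓝 (KL p' q + 0)) :=
    ((hcont.tendsto p').comp (hTlim.comp hφt)).add ((aux_lim m).comp hφt)
  rw [add_zero] at hR
  refine le_of_tendsto_of_tendsto hL hR ?_
  filter_upwards [hev, hφt.eventually hT, hφt.eventually_gt_atTop 0] with j hj hTj hpos
  obtain ⟨ht, hS, hle⟩ := hmax _ hj
  have h1 := Real.log_le_log (aux_pos (φ j) _ q hqpos) (hle _ hTj.1 hTj.2)
  have h2 := (abs_le.1 (aux_type (φ j) hpos _ q hqpos ht)).2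
  have h3 := (abs_le.1 (aux_type (φ j) hpos _ q hqpos hTj.1)).1
  have hn : (0 : ℝ) < (φ j : ℕ) := by exact_mod_cast hpos
  rw [← sub_le_iff_le_add', le_div_iff₀ hn]
  linarith
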